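/- Let p ∈ (0,1) and let (f_n)_{n≥1} be a sequence of functions f_n : {0,1}^n → [0,1]. If lim_{n→∞} Var_r(E_{p/r}[f_n(ψ·ξ) | ψ]) = 0 for some r ∈ (p,1), then lim_{n→∞} Var_r(E_{p/r}[f_n(ψ·ξ) | ψ]) = 0 for every r ∈ (p,1). -/

import Mathlib

/-! Expand `f` in the orthogonal characters `χ_S(ω) = ∏_{i ∈ S} (ω_i - p)` of `ℙ_p`. Integrating out `ξ`
multiplies the squared norm of the `S`-component by `ρ_r ^ |S|`, where
`ρ_r = p (1 - r) / (r (1 - p)) ∈ (0, 1)`, so that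
`Var_r (E_{p/r}[f(ψ·ξ) | ψ]) = ∑_{S ≠ ∅} ρ_r ^ |S| W_S` with spectral weights `W_S ≥ 0` not depending
on `r` (`Var_condExp`). Taking `r = p`, where `ρ_p = 1`, gives `∑_S W_S ≤ 1` (`sum_specWeight_le`).

For two scales `r₀, r` and every `K`, splitting according to `|S| ≤ K` or `|S| > K` yields
`ρ_r ^ |S| ≤ ρ_{r₀} ^ |S| / ρ_{r₀} ^ K + ρ_r ^ K`, hence
`Var_r ≤ Var_{r₀} / ρ_{r₀} ^ K + ρ_r ^ K` (`Var_le_Var`). Letting `n → ∞` and then `K → ∞` finishes.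

The spectral formula is obtained without a change of basis: the joint law of two copies of `ψ·ξ`
that share `ψ` has density `∏_i (1 + ρ_r (ω_i - p)(ω'_i - p) / (p (1 - p)))` with respect to
`ℙ_p ⊗ ℙ_p`, and expanding this product over subsets `S` diagonalises the second moment.
-/


open Finset Filter

namespace PartialObs

/-- Weight of a configuration `ω ∈ {0,1}^n` under the product measure `ℙ_p`. -/
noncomputable def w {n : ℕ} (p : ℝ) (ω : Fin n → Bool) : ℝ :=
  ∏ i, if ω i then p else 1 - p

/-- Expectation with respect to `ℙ_p`. -/
noncomputable def E {n : ℕ} (p : ℝ) (f : (Fin n → Bool) → ℝ) : ℝ :=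
  ∑ ω : Fin n → Bool, w p ω * f ω

/-- Variance with respect to `ℙ_p`. -/
noncomputable def Var {n : ℕ} (p : ℝ) (f : (Fin n → Bool) → ℝ) : ℝ :=
  E p (fun ω => (f ω - E p f) ^ 2)

/-- Coordinatewise product `ψ·ξ` of two configurations. -/
def prodCfg {n : ℕ} (ψ ξ : Fin n → Bool) : Fin n → Bool := fun i => ψ i && ξ i

/-- The conditional expectation `E_{p/r}[f(ψ·ξ) | ψ]`, as a function of `ψ`:
`ξ` is integrated out according to `ℙ_{p/r}`. -/
noncomputable def condExp {n : ℕ} (p r : ℝ) (f : (Fin n → Bool) → ℝ)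
    (ψ : Fin n → Bool) : ℝ :=
  E (p / r) (fun ξ => f (prodCfg ψ ξ))

/-- One-coordinate transition weight of `ψ_i ↦ ψ_i ξ_i`, where `ξ_i` is Bernoulli with mean `q`. -/
noncomputable def trans1 (q : ℝ) (a b : Bool) : ℝ :=
  if a then (if b then q else 1 - q) else (if b then 0 else 1)

/-- The centred coordinate `b - p`, with `b` read as `0` or `1`. -/
noncomputable def cen (p : ℝ) (b : Bool) : ℝ := if b then 1 - p else -p

/-- The contraction factor `ρ_r` acting on the squared norm of degree-one characters. -/
noncomputable def rho (p r : ℝ) : ℝ := p * (1 - r) / (r * (1 - p))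

/-- The spectral weight `W_S` of `f`: the squared `ℙ_p`-inner product of `f` with the character
`χ_S = ∏_{i ∈ S} (ω_i - p)`, divided by the squared norm `(p (1 - p)) ^ |S|` of `χ_S`. -/
noncomputable def specWeight {n : ℕ} (p : ℝ) (f : (Fin n → Bool) → ℝ) (S : Finset (Fin n)) : ℝ :=
  E p (fun ω => f ω * ∏ i ∈ S, cen p (ω i)) ^ 2 / (p * (1 - p)) ^ #S

lemma sum_prod_eq {n : ℕ} (g : Fin n → Bool → ℝ) :
    ∑ ω : Fin n → Bool, ∏ i, g i (ω i) = ∏ i, (g i true + g i false) := by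
  rw [← Fintype.prod_sum]
  simp

lemma sum_w {n : ℕ} (p : ℝ) : ∑ ω : Fin n → Bool, w p ω = 1 := by
  unfold w
  rw [sum_prod_eq (fun _ b => if b then p else 1 - p)]
  simp

lemma w_nonneg {n : ℕ} {p : ℝ} (h0 : 0 ≤ p) (h1 : p ≤ 1) (ω : Fin n → Bool) : 0 ≤ w p ω := by
  refine Finset.prod_nonneg fun i _ => ?_
  split_ifs <;> linarith

lemma Var_eq {n : ℕ} (p : ℝ) (f : (Fin n → Bool) → ℝ) :
    Var p f = E p (fun ω => f ω ^ 2) - E p f ^ 2 := by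
  have h : Var p f = ∑ ω : Fin n → Bool,
      (w p ω * f ω ^ 2 - 2 * E p f * (w p ω * f ω) + E p f ^ 2 * w p ω) := by
    rw [Var]
    generalize E p f = m
    unfold E
    refine Finset.sum_congr rfl fun ω _ => ?_
    ring
  rw [h, Finset.sum_add_distrib, Finset.sum_sub_distrib, ← Finset.mul_sum, ← Finset.mul_sum, sum_w]
  change E p (fun ω => f ω ^ 2) - 2 * E p f * E p f + _ = _
  ring

/-- The conditional expectation as a product transition kernel applied to `f`. -/
lemma condExp_eq {n : ℕ} (p r : ℝ) (f : (Fin n → Bool) → ℝ) (ψ : Fin n → Bool) :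
    condExp p r f ψ = ∑ ω, (∏ i, trans1 (p / r) (ψ i) (ω i)) * f ω := by
  have key : ∀ ω : Fin n → Bool, ∏ i, trans1 (p / r) (ψ i) (ω i)
      = ∑ ξ : Fin n → Bool, if prodCfg ψ ξ = ω then w (p / r) ξ else 0 := by
    intro ω
    have h1 : ∀ ξ : Fin n → Bool, (if prodCfg ψ ξ = ω then w (p / r) ξ else 0)
        = ∏ i, if (ψ i && ξ i) = ω i then (if ξ i then p / r else 1 - p / r) else 0 := by
      intro ξ
      split_ifs with h
      · refine Finset.prod_congr rfl fun i _ => ?_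
        exact (if_pos (congrFun h i)).symm
      · obtain ⟨i, hi⟩ := Function.ne_iff.mp h
        exact (Finset.prod_eq_zero (Finset.mem_univ i) (if_neg hi)).symm
    rw [Finset.sum_congr rfl fun ξ _ => h1 ξ,
      sum_prod_eq (fun i b => if (ψ i && b) = ω i then (if b then p / r else 1 - p / r) else 0)]
    refine Finset.prod_congr rfl fun i _ => ?_
    cases ψ i <;> cases ω i <;> simp [trans1]
  simp_rw [key, Finset.sum_mul]
  rw [Finset.sum_comm]
  unfold condExp E
  refine Finset.sum_congr rfl fun ξ _ => ?_
  simp [ite_mul]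

lemma E_condExp {n : ℕ} {p r : ℝ} (hr : r ≠ 0) (f : (Fin n → Bool) → ℝ) :
    E r (condExp p r f) = E p f := by
  unfold E
  simp_rw [condExp_eq, Finset.mul_sum]
  rw [Finset.sum_comm]
  refine Finset.sum_congr rfl fun ω _ => ?_
  simp_rw [← mul_assoc, ← Finset.sum_mul]
  congr 1
  unfold w
  simp_rw [← Finset.prod_mul_distrib]
  rw [sum_prod_eq (fun i b => (if b then r else 1 - r) * trans1 (p / r) b (ω i))]
  refine Finset.prod_congr rfl fun i _ => ?_
  cases ω i <;> simp [trans1] <;> field_simp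
  ring

/-- The joint law of two copies of `ψ·ξ` sharing `ψ`, expanded over subsets of coordinates. -/
lemma joint_law {n : ℕ} {p r : ℝ} (hp0 : p ≠ 0) (hp1 : 1 - p ≠ 0) (hr : r ≠ 0)
    (ω ω' : Fin n → Bool) :
    ∑ ψ : Fin n → Bool, w r ψ * (∏ i, trans1 (p / r) (ψ i) (ω i))
        * (∏ i, trans1 (p / r) (ψ i) (ω' i))
      = ∑ S : Finset (Fin n), (rho p r / (p * (1 - p))) ^ #S *
          ((w p ω * ∏ i ∈ S, cen p (ω i)) * (w p ω' * ∏ i ∈ S, cen p (ω' i))) := by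
  have h1 : ∑ ψ : Fin n → Bool, w r ψ * (∏ i, trans1 (p / r) (ψ i) (ω i))
        * (∏ i, trans1 (p / r) (ψ i) (ω' i))
      = w p ω * w p ω' *
        ∏ i, (1 + rho p r / (p * (1 - p)) * (cen p (ω i) * cen p (ω' i))) := by
    unfold w
    simp_rw [← Finset.prod_mul_distrib]
    rw [sum_prod_eq (fun i b =>
      (if b then r else 1 - r) * trans1 (p / r) b (ω i) * trans1 (p / r) b (ω' i))]
    refine Finset.prod_congr rfl fun i _ => ?_
    cases ω i <;> cases ω' i <;> simp [trans1, cen, rho] <;> field_simp <;> ring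
  rw [h1, Finset.prod_one_add, Finset.mul_sum, Finset.powerset_univ]
  refine Finset.sum_congr rfl fun S _ => ?_
  rw [Finset.prod_mul_distrib, Finset.prod_mul_distrib, Finset.prod_const]
  ring

lemma E_condExp_sq {n : ℕ} {p r : ℝ} (hp0 : p ≠ 0) (hp1 : 1 - p ≠ 0) (hr : r ≠ 0)
    (f : (Fin n → Bool) → ℝ) :
    E r (fun ψ => condExp p r f ψ ^ 2) = ∑ S, rho p r ^ #S * specWeight p f S := by
  have h1 : E r (fun ψ => condExp p r f ψ ^ 2) = ∑ ω, ∑ ω', (∑ ψ : Fin n → Bool,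
      w r ψ * (∏ i, trans1 (p / r) (ψ i) (ω i)) * (∏ i, trans1 (p / r) (ψ i) (ω' i)))
        * (f ω * f ω') := by
    unfold E
    simp_rw [condExp_eq, sq, Finset.sum_mul_sum, Finset.mul_sum, Finset.sum_mul]
    rw [Finset.sum_comm]
    refine Finset.sum_congr rfl fun ω _ => ?_
    rw [Finset.sum_comm]
    refine Finset.sum_congr rfl fun ω' _ => Finset.sum_congr rfl fun ψ _ => ?_
    ring
  rw [h1]
  simp_rw [joint_law hp0 hp1 hr, Finset.sum_mul]
  have h2 : ∀ ω : Fin n → Bool, ∀ F : (Fin n → Bool) → Finset (Fin n) → ℝ,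
      ∑ ω', ∑ S, F ω' S = ∑ S, ∑ ω', F ω' S := fun _ F => Finset.sum_comm
  rw [Finset.sum_congr rfl fun ω _ => h2 ω _, Finset.sum_comm]
  refine Finset.sum_congr rfl fun S _ => ?_
  unfold specWeight E
  rw [sq, Finset.sum_mul_sum, Finset.sum_div, Finset.mul_sum]
  refine Finset.sum_congr rfl fun ω _ => ?_
  rw [Finset.sum_div, Finset.mul_sum]
  refine Finset.sum_congr rfl fun ω' _ => ?_
  rw [div_pow]
  ring

lemma specWeight_nonneg {n : ℕ} {p : ℝ} (h0 : 0 < p) (h1 : p < 1) (f : (Fin n → Bool) → ℝ)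
    (S : Finset (Fin n)) : 0 ≤ specWeight p f S := by
  have : 0 < 1 - p := by linarith
  unfold specWeight
  positivity

/-- The spectral formula for the two-scale variance. -/
lemma Var_condExp {n : ℕ} {p r : ℝ} (hp0 : p ≠ 0) (hp1 : 1 - p ≠ 0) (hr : r ≠ 0)
    (f : (Fin n → Bool) → ℝ) :
    Var r (condExp p r f) = ∑ S with S ≠ ∅, rho p r ^ #S * specWeight p f S := by
  rw [Var_eq, E_condExp_sq hp0 hp1 hr, E_condExp hr, Finset.filter_ne',
    ← Finset.add_sum_erase _ _ (Finset.mem_univ (∅ : Finset (Fin n)))]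
  simp [specWeight]

lemma E_mem {n : ℕ} {p : ℝ} (h0 : 0 ≤ p) (h1 : p ≤ 1) {f : (Fin n → Bool) → ℝ}
    (hf : ∀ ω, f ω ∈ Set.Icc (0 : ℝ) 1) : E p f ∈ Set.Icc (0 : ℝ) 1 := by
  refine ⟨Finset.sum_nonneg fun ω _ => mul_nonneg (w_nonneg h0 h1 ω) (hf ω).1, ?_⟩
  rw [← sum_w (n := n) p]
  exact Finset.sum_le_sum fun ω _ => mul_le_of_le_one_right (w_nonneg h0 h1 ω) (hf ω).2

/-- Bessel's inequality, from the second-moment formula at the degenerate scale `r = p`. -/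
lemma sum_specWeight_le {n : ℕ} {p : ℝ} (h0 : 0 < p) (h1 : p < 1) {f : (Fin n → Bool) → ℝ}
    (hf : ∀ ω, f ω ∈ Set.Icc (0 : ℝ) 1) : ∑ S, specWeight p f S ≤ 1 := by
  have hp1 : 1 - p ≠ 0 := by linarith
  have h := E_condExp_sq h0.ne' hp1 h0.ne' f
  have hrho : rho p p = 1 := div_self (mul_ne_zero h0.ne' hp1)
  simp only [hrho, one_pow, one_mul] at h
  rw [← h]
  refine (E_mem h0.le h1.le fun ψ => ?_).2
  have hc : condExp p p f ψ ∈ Set.Icc (0 : ℝ) 1 := by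
    unfold condExp
    rw [div_self h0.ne']
    exact E_mem zero_le_one le_rfl fun ξ => hf _
  exact ⟨sq_nonneg _, pow_le_one₀ hc.1 hc.2⟩

lemma rho_mem {p r : ℝ} (h0 : 0 < p) (h1 : p < 1) (hr : r ∈ Set.Ioo p 1) :
    rho p r ∈ Set.Ioo (0 : ℝ) 1 := by
  obtain ⟨h2, h3⟩ := hr
  have hpos : 0 < r * (1 - p) := mul_pos (h0.trans h2) (sub_pos.2 h1)
  refine ⟨div_pos (mul_pos h0 (by linarith)) hpos, ?_⟩
  unfold rho
  rw [div_lt_one hpos]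
  nlinarith

lemma pow_le_split {a b : ℝ} (ha : a ∈ Set.Ioo (0 : ℝ) 1) (hb : b ∈ Set.Ioo (0 : ℝ) 1)
    (K k : ℕ) : b ^ k ≤ a ^ k / a ^ K + b ^ K := by
  have haK : 0 < a ^ K := pow_pos ha.1 K
  rcases le_total k K with h | h
  · have h1 : 1 ≤ a ^ k / a ^ K :=
      (one_le_div haK).2 (pow_le_pow_of_le_one ha.1.le ha.2.le h)
    have h2 : b ^ k ≤ 1 := pow_le_one₀ hb.1.le hb.2.le
    have h3 : 0 < b ^ K := pow_pos hb.1 K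
    linarith
  · have h1 : b ^ k ≤ b ^ K := pow_le_pow_of_le_one hb.1.le hb.2.le h
    have h2 : 0 < a ^ k / a ^ K := div_pos (pow_pos ha.1 k) haK
    linarith

/-- Comparison of two scales: degrees above `K` contribute at most `ρ_r ^ K` at scale `r`, and
degrees up to `K` are controlled by the variance at scale `r₀`. -/
lemma Var_le_Var {n : ℕ} {p r₀ r : ℝ} (h0 : 0 < p) (h1 : p < 1) (hr₀ : r₀ ∈ Set.Ioo p 1)
    (hr : r ∈ Set.Ioo p 1) {f : (Fin n → Bool) → ℝ} (hf : ∀ ω, f ω ∈ Set.Icc (0 : ℝ) 1) (K : ℕ) :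
    Var r (condExp p r f) ≤ Var r₀ (condExp p r₀ f) / rho p r₀ ^ K + rho p r ^ K := by
  have hp1 : 1 - p ≠ 0 := by linarith
  have ha := rho_mem h0 h1 hr₀
  have hb := rho_mem h0 h1 hr
  rw [Var_condExp h0.ne' hp1 (h0.trans hr.1).ne', Var_condExp h0.ne' hp1 (h0.trans hr₀.1).ne']
  have hW := specWeight_nonneg h0 h1 f
  have hsum : ∑ S with S ≠ ∅, specWeight p f S ≤ 1 :=
    (Finset.sum_le_sum_of_subset_of_nonneg (Finset.filter_subset _ _) fun S _ _ => hW S).trans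
      (sum_specWeight_le h0 h1 hf)
  calc ∑ S with S ≠ ∅, rho p r ^ #S * specWeight p f S
      ≤ ∑ S with S ≠ ∅, (rho p r₀ ^ #S * specWeight p f S / rho p r₀ ^ K
          + rho p r ^ K * specWeight p f S) := by
        refine Finset.sum_le_sum fun S _ => ?_
        have := mul_le_mul_of_nonneg_right (pow_le_split ha hb K #S) (hW S)
        rw [add_mul, div_mul_eq_mul_div] at this
        exact this
    _ = (∑ S with S ≠ ∅, rho p r₀ ^ #S * specWeight p f S) / rho p r₀ ^ K
          + rho p r ^ K * ∑ S with S ≠ ∅, specWeight p f S := by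
        rw [Finset.sum_add_distrib, Finset.sum_div, Finset.mul_sum]
    _ ≤ _ := by
        gcongr
        exact mul_le_of_le_one_right (pow_nonneg hb.1.le K) hsum

lemma Var_nonneg {n : ℕ} {p : ℝ} (h0 : 0 ≤ p) (h1 : p ≤ 1) (f : (Fin n → Bool) → ℝ) :
    0 ≤ Var p f :=
  Finset.sum_nonneg fun ω _ => mul_nonneg (w_nonneg h0 h1 ω) (sq_nonneg _)

/-- if the two-scale variance tends to `0` for some `r ∈ (p,1)`,
then it does for every `r ∈ (p,1)`. -/
theorem clueless_for_some_iff_for_all (p : ℝ) (hp : p ∈ Set.Ioo (0 : ℝ) 1)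
    (f : ∀ n, (Fin n → Bool) → ℝ)
    (hf : ∀ n ω, f n ω ∈ Set.Icc (0 : ℝ) 1)
    (h : ∃ r ∈ Set.Ioo p 1,
      Tendsto (fun n => Var r (condExp p r (f n))) atTop (nhds 0)) :
    ∀ r ∈ Set.Ioo p 1,
      Tendsto (fun n => Var r (condExp p r (f n))) atTop (nhds 0) := by
  obtain ⟨h0, h1⟩ := hp
  obtain ⟨r₀, hr₀, hlim⟩ := h
  intro r hr
  have ha := rho_mem h0 h1 hr₀
  have hb := rho_mem h0 h1 hr
  rw [Metric.tendsto_atTop] at hlim ⊢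
  intro ε hε
  obtain ⟨K, hK⟩ := exists_pow_lt_of_lt_one (half_pos hε) hb.2
  have haK : 0 < rho p r₀ ^ K := pow_pos ha.1 K
  -- The threshold is chosen so that dividing by `ρ_{r₀} ^ K` leaves less than `ε / 2`.
  obtain ⟨N, hN⟩ := hlim (ε / 2 * rho p r₀ ^ K) (by positivity)
  refine ⟨N, fun n hn => ?_⟩
  have hv := hN n hn
  rw [Real.dist_0_eq_abs, abs_lt] at hv
  have hv2 := (div_lt_iff₀ haK).2 hv.2
  rw [Real.dist_0_eq_abs, abs_of_nonneg (Var_nonneg (h0.trans hr.1).le hr.2.le _)]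
  have := Var_le_Var h0 h1 hr₀ hr (hf n) K
  linarith

end PartialObs
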